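/- arXiv:2307.02652 — 3 statements merged into one kernel-verified Lean document; each statement's English description precedes it below -/
import Mathlib

section
/- For all nonnegative integers s and all positive integers n, and for every integer k ≥ 0, the coefficient of t^k in N_{nn}(t) satisfies: Σ_{s=0}^{∞} S⊖(s, n−1 | s, n−1) t^s = N_{nn}(t)/(1−t)^{2n} as formal power series; concretely, for every s ≥ 0, S⊖(s, n−1 | s, n−1) = Σ_{k=1}^{min(s, n−1)} S⊖(k, n−k | k, n−k) · C(s−k+2n−1, 2n−1). (The rational form H'_n(t) = N_n(t)/(1−t)^{2n} combined with Theorem 3.1, extracting the coefficient of t^s.) -/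
open Finset

open scoped Classical in
/-- `Par a b` is the set of Young diagrams (lower sets of boxes) fitting inside an
`a × b` rectangle, encoded as finsets of cells `(i, j)` with `i < a` and `j < b`. -/
noncomputable def Par (a b : ℕ) : Finset (Finset (ℕ × ℕ)) :=
  ((Finset.range a ×ˢ Finset.range b).powerset).filter
    (fun S => IsLowerSet (S : Set (ℕ × ℕ)))

/-- `Sdiff a b c d` is the sum of `|λ ⊖ μ|` over all `λ ∈ Par(a×b)` and `μ ∈ Par(c×d)`. -/
noncomputable def Sdiff (a b c d : ℕ) : ℕ :=
  ∑ l ∈ Par a b, ∑ m ∈ Par c d, (symmDiff l m).card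

/-- The polynomial `W_{pq}(t) = Σ_{k=0}^{min(p,q)-1} C(p-1,k) C(q-1,k) t^k`. -/
noncomputable def W (p q : ℕ) : Polynomial ℤ :=
  ∑ k ∈ Finset.range (min p q),
    Polynomial.C (((p - 1).choose k : ℤ) * ((q - 1).choose k : ℤ)) * Polynomial.X ^ k

theorem mem_Par' {a b : ℕ} {S : Finset (ℕ × ℕ)} : S ∈ Par a b ↔
    (∀ i j, (i, j) ∈ S → i < a ∧ j < b) ∧
    (∀ i j i' j', i' ≤ i → j' ≤ j → (i, j) ∈ S → (i', j') ∈ S) := by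
  classical
  unfold Par
  rw [Finset.mem_filter, Finset.mem_powerset]
  constructor
  · rintro ⟨h1, h2⟩
    refine ⟨fun i j h => ?_, fun i j i' j' hi hj h => ?_⟩
    · simpa using h1 h
    · exact h2 (show ((i', j') : ℕ × ℕ) ≤ (i, j) from ⟨hi, hj⟩) h
  · rintro ⟨h1, h2⟩
    refine ⟨?_, ?_⟩
    · rintro ⟨i, j⟩ h
      simpa using h1 i j h
    · rintro ⟨i, j⟩ ⟨i', j'⟩ hle h
      exact h2 i j i' j' hle.1 hle.2 h

/-- shift all the cells one row down -/
def shiftRow (T : Finset (ℕ × ℕ)) : Finset (ℕ × ℕ) := T.image (fun x => (x.1 + 1, x.2))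

/-- put a row of length `c` on top of `T` -/
def addRow (c : ℕ) (T : Finset (ℕ × ℕ)) : Finset (ℕ × ℕ) :=
  (Finset.range c).image (fun j => (0, j)) ∪ shiftRow T

theorem zero_mem_addRow {c j : ℕ} {T : Finset (ℕ × ℕ)} : (0, j) ∈ addRow c T ↔ j < c := by
  simp [addRow, shiftRow]

theorem succ_mem_addRow {c i j : ℕ} {T : Finset (ℕ × ℕ)} :
    (i + 1, j) ∈ addRow c T ↔ (i, j) ∈ T := by
  simp [addRow, shiftRow]

theorem addRow_injective (c : ℕ) : Function.Injective (addRow c) := by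
  intro S T h
  ext ⟨i, j⟩
  rw [← succ_mem_addRow (c := c), h, succ_mem_addRow]

theorem card_symmDiff_addRow (c d : ℕ) (S T : Finset (ℕ × ℕ)) :
    ((symmDiff (addRow c S) (addRow d T)).card : ℤ)
      = |(c : ℤ) - d| + ((symmDiff S T).card : ℤ) := by
  have h : symmDiff (addRow c S) (addRow d T)
      = (Finset.Ico (min c d) (max c d)).image (fun j => (0, j)) ∪ shiftRow (symmDiff S T) := by
    ext ⟨i, j⟩
    cases i with
    | zero =>
      simp only [Finset.mem_symmDiff, zero_mem_addRow]
      simp [shiftRow]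
      omega
    | succ i =>
      simp only [Finset.mem_symmDiff, succ_mem_addRow]
      simp [shiftRow, Finset.mem_symmDiff]
  rw [h, Finset.card_union_of_disjoint, Finset.card_image_of_injective, shiftRow,
    Finset.card_image_of_injective]
  · rw [Nat.card_Ico]
    push_cast
    congr 1
    rcases le_total c d with h | h
    · rw [abs_of_nonpos (by omega)]; simp [h]
    · rw [abs_of_nonneg (by omega)]; simp [h]
  · rintro ⟨a, b⟩ ⟨a', b'⟩ h; simpa using h
  · intro a b h; simpa using h
  · rw [Finset.disjoint_left]
    rintro ⟨i, j⟩ h1 h2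
    simp [shiftRow] at h1 h2
    omega

/-- `Par s (p-1)`, read as empty for `p = 0`. -/
noncomputable def Q (s : ℕ) : ℕ → Finset (Finset (ℕ × ℕ))
  | 0 => ∅
  | p + 1 => Par s p

theorem mem_Q {s p : ℕ} {S : Finset (ℕ × ℕ)} : S ∈ Q s p ↔ 0 < p ∧ S ∈ Par s (p - 1) := by
  cases p <;> simp [Q]

theorem addRow_mem {s p : ℕ} {T : Finset (ℕ × ℕ)} (h : T ∈ Par s p) :
    addRow p T ∈ Par (s + 1) p := by
  rw [mem_Par'] at *
  obtain ⟨h1, h2⟩ := h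
  constructor
  · intro i j hh
    cases i with
    | zero => rw [zero_mem_addRow] at hh; omega
    | succ i => rw [succ_mem_addRow] at hh; have := h1 _ _ hh; omega
  · intro i j i' j' hi hj hh
    cases i with
    | zero =>
      obtain rfl : i' = 0 := by omega
      rw [zero_mem_addRow] at *; omega
    | succ i =>
      rw [succ_mem_addRow] at hh
      cases i' with
      | zero => have := h1 _ _ hh; rw [zero_mem_addRow]; omega
      | succ i' => rw [succ_mem_addRow]; exact h2 _ _ _ _ (by omega) hj hh

theorem Q_succ (s p : ℕ) :
    Q (s + 1) (p + 1) = Q (s + 1) p ∪ (Q s (p + 1)).image (addRow p) := by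
  ext S
  simp only [Finset.mem_union, Finset.mem_image]
  constructor
  · intro h
    change S ∈ Par (s + 1) p at h
    by_cases hp : ∀ j < p, (0, j) ∈ S
    · right
      rw [mem_Par'] at h
      obtain ⟨h1, h2⟩ := h
      have key : addRow p ((Finset.range s ×ˢ Finset.range p).filter
          (fun x => (x.1 + 1, x.2) ∈ S)) = S := by
        ext ⟨i, j⟩
        cases i with
        | zero =>
          rw [zero_mem_addRow]
          exact ⟨hp j, fun hh => (h1 _ _ hh).2⟩
        | succ i =>
          rw [succ_mem_addRow]
          simp only [Finset.mem_filter, Finset.mem_product, Finset.mem_range]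
          constructor
          · exact fun hh => hh.2
          · intro hh; have := h1 _ _ hh; exact ⟨by omega, hh⟩
      refine ⟨_, ?_, key⟩
      change _ ∈ Par s p
      rw [mem_Par']
      simp only [Finset.mem_filter, Finset.mem_product, Finset.mem_range]
      refine ⟨fun i j hh => hh.1, fun i j i' j' hi hj hh => ⟨by omega, ?_⟩⟩
      exact h2 _ _ _ _ (by omega) hj hh.2
    · left
      push Not at hp
      obtain ⟨j, hj, hjS⟩ := hp
      rw [mem_Q]
      refine ⟨by omega, ?_⟩
      rw [mem_Par'] at *
      refine ⟨fun i j' hh => ⟨(h.1 _ _ hh).1, ?_⟩, h.2⟩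
      by_contra hc
      exact hjS (h.2 _ _ _ _ (Nat.zero_le _) (by omega) hh)
  · rintro (h | ⟨T, hT, rfl⟩)
    · rw [mem_Q] at h
      change S ∈ Par (s + 1) p
      rw [mem_Par'] at *
      refine ⟨fun i j hh => ?_, h.2.2⟩
      have := h.2.1 _ _ hh
      omega
    · exact addRow_mem hT

theorem Q_disj (s p : ℕ) : Disjoint (Q (s + 1) p) ((Q s (p + 1)).image (addRow p)) := by
  rw [Finset.disjoint_left]
  intro S h1 h2
  rw [Finset.mem_image] at h2
  obtain ⟨T, hT, rfl⟩ := h2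
  rw [mem_Q, mem_Par'] at h1
  have := h1.2.1 0 (p - 1) (by rw [zero_mem_addRow]; omega)
  omega

theorem sum_Q_succ (s p : ℕ) (f : Finset (ℕ × ℕ) → ℤ) :
    ∑ l ∈ Q (s + 1) (p + 1), f l
      = ∑ l ∈ Q (s + 1) p, f l + ∑ l ∈ Q s (p + 1), f (addRow p l) := by
  rw [Q_succ, Finset.sum_union (Q_disj s p), Finset.sum_image]
  exact fun a _ b _ h => addRow_injective p h

theorem Q_zero_row (p : ℕ) : Q 0 (p + 1) = {∅} := by
  ext S
  change S ∈ Par 0 p ↔ _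
  rw [mem_Par', Finset.mem_singleton]
  constructor
  · rintro ⟨h, -⟩
    rw [Finset.eq_empty_iff_forall_notMem]
    rintro ⟨i, j⟩ hh
    have := h _ _ hh
    omega
  · rintro rfl; simp

theorem card_Q (s p : ℕ) : ((Q s (p + 1)).card : ℤ) = ((s + p).choose s : ℤ) := by
  induction s generalizing p with
  | zero => simp [Q_zero_row]
  | succ s ih =>
    induction p with
    | zero =>
      rw [Q_succ, Finset.card_union_of_disjoint (Q_disj s 0),
        Finset.card_image_of_injective _ (addRow_injective 0)]
      push_cast
      rw [ih]
      simp [Q]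
    | succ p ihp =>
      rw [Q_succ, Finset.card_union_of_disjoint (Q_disj s _),
        Finset.card_image_of_injective _ (addRow_injective _)]
      push_cast
      rw [ih, ihp]
      have : s + 1 + (p + 1) = (s + (p + 1)) + 1 := by omega
      rw [this, Nat.choose_succ_succ]
      have : s + 1 + p = s + (p + 1) := by omega
      rw [this]
      push_cast
      ring

/-- the total symmetric difference over `Q s p × Q s q` -/
noncomputable def G (s p q : ℕ) : ℤ := ∑ l ∈ Q s p, ∑ m ∈ Q s q, ((symmDiff l m).card : ℤ)

theorem G_eq_Sdiff (s a b : ℕ) : G s (a + 1) (b + 1) = (Sdiff s a s b : ℤ) := by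
  simp [G, Sdiff, Q]

theorem G_left (s q : ℕ) : G s 0 q = 0 := by simp [G, Q]
theorem G_right (s p : ℕ) : G s p 0 = 0 := by simp [G, Q]
theorem G_zero (p q : ℕ) : G 0 p q = 0 := by
  cases p with
  | zero => exact G_left _ _
  | succ p =>
    cases q with
    | zero => exact G_right _ _
    | succ q => simp [G, Q_zero_row]

theorem G_succ (s p q : ℕ) : G (s + 1) (p + 1) (q + 1)
    = G (s + 1) p (q + 1) + G (s + 1) (p + 1) q - G (s + 1) p q + G s (p + 1) (q + 1)
      + |(p : ℤ) - q| * (((s + p).choose s : ℤ) * ((s + q).choose s : ℤ)) := by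
  have e : ∑ l ∈ Q s (p + 1), ∑ m ∈ Q s (q + 1),
      ((symmDiff (addRow p l) (addRow q m)).card : ℤ)
      = G s (p + 1) (q + 1)
        + |(p : ℤ) - q| * (((s + p).choose s : ℤ) * ((s + q).choose s : ℤ)) := by
    simp only [card_symmDiff_addRow, Finset.sum_add_distrib, Finset.sum_const, nsmul_eq_mul,
      card_Q, G]
    ring
  have e1 : G (s + 1) (p + 1) (q + 1) = G (s + 1) p (q + 1)
      + (∑ l ∈ Q s (p + 1), ∑ m ∈ Q (s + 1) q, ((symmDiff (addRow p l) m).card : ℤ)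
        + ∑ l ∈ Q s (p + 1), ∑ m ∈ Q s (q + 1),
          ((symmDiff (addRow p l) (addRow q m)).card : ℤ)) := by
    unfold G
    rw [sum_Q_succ s p, ← Finset.sum_add_distrib]
    congr 1
    refine Finset.sum_congr rfl fun l _ => ?_
    rw [sum_Q_succ s q]
  have e2 : G (s + 1) (p + 1) q = G (s + 1) p q
      + ∑ l ∈ Q s (p + 1), ∑ m ∈ Q (s + 1) q, ((symmDiff (addRow p l) m).card : ℤ) := by
    unfold G
    rw [sum_Q_succ s p]
  rw [e1, e2, e]
  ring

theorem W_coeff (p q k : ℕ) : (W (p + 1) (q + 1)).coeff k = (p.choose k : ℤ) * (q.choose k : ℤ) := by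
  unfold W
  simp only [Polynomial.finsetSum_coeff, Polynomial.coeff_C_mul_X_pow, Nat.add_sub_cancel]
  rw [Finset.sum_ite_eq]
  split_ifs with h
  · rfl
  · rw [Finset.mem_range] at h
    rcases le_total p q with h' | h'
    · rw [Nat.choose_eq_zero_of_lt (show p < k by omega)]; simp
    · rw [Nat.choose_eq_zero_of_lt (show q < k by omega)]; simp

theorem W_succ (p q : ℕ) : W (p + 2) (q + 2)
    = W (p + 1) (q + 2) + W (p + 2) (q + 1) - (1 - Polynomial.X) * W (p + 1) (q + 1) := by
  ext k
  simp only [sub_mul, one_mul, Polynomial.coeff_sub, Polynomial.coeff_add]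
  cases k with
  | zero => simp [W_coeff, Polynomial.coeff_X_mul_zero]
  | succ k =>
    rw [Polynomial.coeff_X_mul]
    simp only [W_coeff, Nat.choose_succ_succ]
    push_cast
    ring

theorem W_one_left (q : ℕ) : W 1 (q + 1) = 1 := by
  ext k
  rw [show (1 : ℕ) = 0 + 1 from rfl, W_coeff]
  cases k <;> simp [Polynomial.coeff_one]

theorem W_one_right (p : ℕ) : W (p + 1) 1 = 1 := by
  ext k
  rw [show (1 : ℕ) = 0 + 1 from rfl, W_coeff]
  cases k <;> simp [Polynomial.coeff_one]

/-- generating function of the number of pairs of diagrams -/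
noncomputable def CC (p q : ℕ) : PowerSeries ℤ :=
  PowerSeries.mk fun s => ((s + p).choose s : ℤ) * ((s + q).choose s : ℤ)

theorem CC_succ (p q : ℕ) : (1 - PowerSeries.X) * CC (p + 1) (q + 1)
    = CC p (q + 1) + CC (p + 1) q - CC p q := by
  ext k
  simp only [sub_mul, one_mul, map_sub, map_add]
  cases k with
  | zero => simp [CC]
  | succ k =>
    rw [PowerSeries.coeff_succ_X_mul]
    simp only [CC, PowerSeries.coeff_mk]
    have h : ∀ r : ℕ, (k + 1 + (r + 1)).choose (k + 1)
        = (k + (r + 1)).choose k + (k + 1 + r).choose (k + 1) := by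
      intro r
      rw [show k + 1 + (r + 1) = (k + (r + 1)) + 1 by omega, Nat.choose_succ_succ,
        show k + 1 + r = k + (r + 1) by omega]
    rw [h, h]
    push_cast
    ring

theorem mk_choose_mul (d : ℕ) :
    (PowerSeries.mk fun s => ((s + d).choose s : ℤ)) * (1 - PowerSeries.X) ^ (d + 1) = 1 := by
  refine Eq.trans ?_ (PowerSeries.mk_add_choose_mul_one_sub_pow_eq_one ℤ d)
  congr 2
  ext s
  congr 1
  rw [add_comm s d, Nat.choose_symm_add]

theorem CC_eq (p q : ℕ) : CC p q * (1 - PowerSeries.X) ^ (p + q + 1)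
    = ((W (p + 1) (q + 1) : Polynomial ℤ) : PowerSeries ℤ) := by
  induction p generalizing q with
  | zero =>
    rw [show 0 + 1 = 1 from rfl, W_one_left, Polynomial.coe_one]
    refine Eq.trans ?_ (mk_choose_mul q)
    simp [CC]
  | succ p ihp =>
    induction q with
    | zero =>
      rw [show 0 + 1 = 1 from rfl, W_one_right, Polynomial.coe_one]
      refine Eq.trans ?_ (mk_choose_mul (p + 1))
      simp [CC]
    | succ q ihq =>
      rw [W_succ]
      simp only [Polynomial.coe_add, Polynomial.coe_sub, Polynomial.coe_mul, Polynomial.coe_one,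
        Polynomial.coe_X]
      rw [← ihp, ← ihp, ← ihq]
      have := CC_succ p q
      linear_combination (1 - PowerSeries.X) ^ (p + q + 2) * this

/-- generating function of `G` -/
noncomputable def H (p q : ℕ) : PowerSeries ℤ := PowerSeries.mk fun s => G s p q

theorem H_succ (p q : ℕ) : (1 - PowerSeries.X) * H (p + 1) (q + 1)
    = H p (q + 1) + H (p + 1) q - H p q
      + PowerSeries.C |(p : ℤ) - q| * PowerSeries.X * CC p q := by
  ext k
  simp only [sub_mul, one_mul, map_sub, map_add, mul_assoc, PowerSeries.coeff_C_mul]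
  cases k with
  | zero => simp [H, G_zero]
  | succ k =>
    rw [PowerSeries.coeff_succ_X_mul, PowerSeries.coeff_succ_X_mul]
    simp only [CC, H, PowerSeries.coeff_mk]
    rw [G_succ]
    ring

theorem N_eq_H (N : ℕ → ℕ → Polynomial ℤ)
    (h0q : ∀ q, N 0 q = 0) (hp0 : ∀ p, N p 0 = 0)
    (hrec : ∀ p q : ℕ,
      N (p + 1) (q + 1) = N p (q + 1) + N (p + 1) q - (1 - Polynomial.X) * N p q
        + Polynomial.C (|(p : ℤ) - (q : ℤ)|) * Polynomial.X * W (p + 1) (q + 1)) (p q : ℕ) :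
    H p q * (1 - PowerSeries.X) ^ (p + q) = ((N p q : Polynomial ℤ) : PowerSeries ℤ) := by
  induction p generalizing q with
  | zero =>
    have : H 0 q = 0 := by ext; simp [H, G_left]
    simp [this, h0q]
  | succ p ihp =>
    induction q with
    | zero =>
      have : H (p + 1) 0 = 0 := by ext; simp [H, G_right]
      simp [this, hp0]
    | succ q ihq =>
      rw [hrec]
      simp only [Polynomial.coe_add, Polynomial.coe_sub, Polynomial.coe_mul, Polynomial.coe_one,
        Polynomial.coe_X, Polynomial.coe_C]
      rw [← ihp, ← ihp, ← ihq, ← CC_eq]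
      have := H_succ p q
      linear_combination (1 - PowerSeries.X) ^ (p + q + 1) * this

theorem N_coeff (N : ℕ → ℕ → Polynomial ℤ)
    (h0q : ∀ q, N 0 q = 0) (hp0 : ∀ p, N p 0 = 0)
    (hrec : ∀ p q : ℕ,
      N (p + 1) (q + 1) = N p (q + 1) + N (p + 1) q - (1 - Polynomial.X) * N p q
        + Polynomial.C (|(p : ℤ) - (q : ℤ)|) * Polynomial.X * W (p + 1) (q + 1)) (p q k : ℕ) :
    (N p q).coeff k = G k (p + 1 - k) (q + 1 - k) := by
  induction p generalizing q k with
  | zero =>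
    rw [h0q]
    cases k with
    | zero => simp [G_zero]
    | succ k => rw [show 0 + 1 - (k + 1) = 0 by omega, G_left]; simp
  | succ p ihp =>
    induction q generalizing k with
    | zero =>
      rw [hp0]
      cases k with
      | zero => simp [G_zero]
      | succ k => rw [show 0 + 1 - (k + 1) = 0 by omega, G_right]; simp
    | succ q ihq =>
      rw [hrec]
      simp only [sub_mul, one_mul, Polynomial.coeff_sub, Polynomial.coeff_add, mul_assoc,
        Polynomial.coeff_C_mul]
      cases k with
      | zero => simp [ihp, ihq, G_zero]
      | succ k =>
        rw [Polynomial.coeff_X_mul, Polynomial.coeff_X_mul, W_coeff, ihp, ihp, ihp, ihq]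
        by_cases hp : p < k
        · rw [Nat.choose_eq_zero_of_lt hp]
          simp [show p + 1 - (k + 1) = 0 by omega, show p + 1 - k = 0 by omega,
            show p + 1 + 1 - (k + 1) = 0 by omega, G_left]
        by_cases hq : q < k
        · rw [Nat.choose_eq_zero_of_lt hq]
          simp [show q + 1 - (k + 1) = 0 by omega, show q + 1 - k = 0 by omega,
            show q + 1 + 1 - (k + 1) = 0 by omega, G_right]
        obtain ⟨a, rfl⟩ := Nat.exists_eq_add_of_le (not_lt.mp hp)
        obtain ⟨b, rfl⟩ := Nat.exists_eq_add_of_le (not_lt.mp hq)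
        rw [show k + a + 1 + 1 - (k + 1) = a + 1 by omega,
          show k + b + 1 + 1 - (k + 1) = b + 1 by omega,
          show k + a + 1 - (k + 1) = a by omega, show k + b + 1 - (k + 1) = b by omega,
          show k + a + 1 - k = a + 1 by omega, show k + b + 1 - k = b + 1 by omega, G_succ]
        push_cast
        rw [show (k : ℤ) + a - (k + b) = a - b by ring]
        ring

/-- The rational form `H'_n(t) = N_n(t)/(1-t)^{2n}` combined with Theorem 3.1: as formal
power series, `Σ_{s≥0} S⊖(s, n-1 | s, n-1) t^s · (1-t)^{2n} = N_{nn}(t)`; extracting the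
coefficient of `t^s` gives
`S⊖(s, n-1 | s, n-1) = Σ_{k=1}^{min(s,n-1)} S⊖(k, n-k | k, n-k)·C(s-k+2n-1, 2n-1)`. -/
theorem Hn_rational_form (N : ℕ → ℕ → Polynomial ℤ)
    (h0q : ∀ q, N 0 q = 0) (hp0 : ∀ p, N p 0 = 0) (h11 : N 1 1 = 0)
    (hrec : ∀ p q : ℕ, 1 ≤ p → 1 ≤ q → ¬(p = 1 ∧ q = 1) →
      N p q = N (p - 1) q + N p (q - 1) - (1 - Polynomial.X) * N (p - 1) (q - 1)
        + Polynomial.C (|(p : ℤ) - (q : ℤ)|) * Polynomial.X * W p q)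
    (n : ℕ) (hn : 1 ≤ n) :
    (PowerSeries.mk (fun s => (Sdiff s (n - 1) s (n - 1) : ℤ)))
        * (1 - PowerSeries.X) ^ (2 * n) = (N n n : PowerSeries ℤ) ∧
    ∀ s : ℕ,
      Sdiff s (n - 1) s (n - 1)
        = ∑ k ∈ Finset.Icc 1 (min s (n - 1)),
            Sdiff k (n - k) k (n - k) * (s - k + 2 * n - 1).choose (2 * n - 1) := by
  have hrec' : ∀ p q : ℕ,
      N (p + 1) (q + 1) = N p (q + 1) + N (p + 1) q - (1 - Polynomial.X) * N p q
        + Polynomial.C (|(p : ℤ) - (q : ℤ)|) * Polynomial.X * W (p + 1) (q + 1) := by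
    intro p q
    by_cases h : p = 0 ∧ q = 0
    · obtain ⟨rfl, rfl⟩ := h
      simp [h11, h0q, hp0]
    · rw [hrec (p + 1) (q + 1) (by omega) (by omega) (by omega)]
      simp
  obtain ⟨n, rfl⟩ : ∃ m, n = m + 1 := ⟨n - 1, by omega⟩
  have hH := N_eq_H N h0q hp0 hrec' (n + 1) (n + 1)
  have hS : (PowerSeries.mk (fun s => (Sdiff s (n + 1 - 1) s (n + 1 - 1) : ℤ)))
      = H (n + 1) (n + 1) := by
    ext s
    simp [H, G_eq_Sdiff]
  rw [← two_mul] at hH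
  refine ⟨by rw [hS, hH], fun s => ?_⟩
  have hH2 : H (n + 1) (n + 1) = ((N (n + 1) (n + 1) : Polynomial ℤ) : PowerSeries ℤ)
      * PowerSeries.mk fun s => ((s + (2 * n + 1)).choose s : ℤ) := by
    rw [← hH]
    have := mk_choose_mul (2 * n + 1)
    rw [show 2 * (n + 1) = 2 * n + 1 + 1 by ring]
    linear_combination (-H (n + 1) (n + 1)) * this
  have hc := congrArg (PowerSeries.coeff s) hH2
  rw [PowerSeries.coeff_mul, Finset.Nat.sum_antidiagonal_eq_sum_range_succ_mk] at hc
  simp only [H, PowerSeries.coeff_mk, Polynomial.coeff_coe, G_eq_Sdiff,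
    N_coeff N h0q hp0 hrec'] at hc
  zify
  rw [Nat.add_sub_cancel, hc]
  symm
  apply Finset.sum_subset_zero_on_sdiff
  · intro k hk
    simp only [Finset.mem_Icc, Finset.mem_range] at *
    omega
  · intro k hk
    simp only [Finset.mem_Icc, Finset.mem_range, Finset.mem_sdiff] at hk
    by_cases h0 : k = 0
    · subst h0
      simp [G_zero]
    · by_cases h1 : k = n + 1
      · subst h1
        rw [show n + 1 + 1 - (n + 1) = 0 + 1 by omega, G_eq_Sdiff]
        have : Par (n + 1) 0 = {∅} := by
          ext S
          rw [mem_Par', Finset.mem_singleton]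
          constructor
          · rintro ⟨h, -⟩
            rw [Finset.eq_empty_iff_forall_notMem]
            rintro ⟨i, j⟩ hh
            have := h _ _ hh
            omega
          · rintro rfl; simp
        simp [Sdiff, this]
      · rw [show n + 1 + 1 - k = 0 by omega, G_left]
        simp
  · intro k hk
    simp only [Finset.mem_Icc] at hk
    rw [show n + 1 + 1 - k = (n + 1 - k) + 1 by omega, G_eq_Sdiff]
    congr 2
    rw [show s - k + 2 * (n + 1) - 1 = s - k + (2 * n + 1) by omega,
      show 2 * (n + 1) - 1 = 2 * n + 1 by omega, Nat.choose_symm_add]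
end

section
/- For every positive integer n and all integers j, k with 1 ≤ j ≤ k and 2k ≤ n, one has j(n−j)·C(2n+2, 2j+1) ≤ k(n−k)·C(2n+2, 2k+1); that is, the sequence k ↦ k(n−k)·C(2n+2, 2k+1) is weakly increasing for 1 ≤ k ≤ n/2. (The monotonicity claim proved in Corollary 4.2.) -/
theorem choose_mono_half_aux (m a d : ℕ) (h : a + d ≤ m / 2) :
    m.choose a ≤ m.choose (a + d) := by
  induction d with
  | zero => exact le_refl _
  | succ d ih =>
    exact (ih (by omega)).trans (Nat.choose_le_succ_of_lt_half_left (by omega))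

/-- The monotonicity claim proved in Corollary 4.2: the sequence
`k ↦ k(n-k)·C(2n+2, 2k+1)` is weakly increasing for `1 ≤ k ≤ n/2`. -/
theorem coeff_sequence_monotone (n j k : ℕ) (hn : 1 ≤ n)
    (hj : 1 ≤ j) (hjk : j ≤ k) (hk : 2 * k ≤ n) :
    j * (n - j) * (2 * n + 2).choose (2 * j + 1)
      ≤ k * (n - k) * (2 * n + 2).choose (2 * k + 1) := by
  apply Nat.mul_le_mul
  · obtain ⟨d, rfl⟩ := Nat.exists_eq_add_of_le hjk
    obtain ⟨e, rfl⟩ := Nat.exists_eq_add_of_le hk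
    have h1 : 2 * (j + d) + e - j = j + 2 * d + e := by omega
    have h2 : 2 * (j + d) + e - (j + d) = j + d + e := by omega
    rw [h1, h2]
    nlinarith [Nat.zero_le (d * e), Nat.zero_le (d * d)]
  · have h := choose_mono_half_aux (2 * n + 2) (2 * j + 1) (2 * k - 2 * j) (by omega)
    have h3 : 2 * j + 1 + (2 * k - 2 * j) = 2 * k + 1 := by omega
    rwa [h3] at h
end

section
/- For all nonnegative integers s and all positive integers n, the map sending a weak composition α = (α_1, …, α_n) ∈ C(s,n) to the partition ((n−1)^{α_1}, (n−2)^{α_2}, …, 2^{α_{n−2}}, 1^{α_{n−1}}) (where exponents denote multiplicities of parts, and the part sizes coming from α_n are zero and hence omitted) is a bijection from C(s,n) onto Par(s×(n−1)), and under this bijection EMD(α, β) = |λ ⊖ μ| for all α, β ∈ C(s,n) with images λ, μ. (The bijection and distance identity used in Section 4.2.) -/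
open Finset

/-- The one-dimensional earth mover's distance between two weak compositions
`α, β` of the same number `s` into `n` parts:
`EMD(α,β) = Σ_{j=1}^n |Σ_{i=1}^j (α_i - β_i)|`. -/
def EMD {n : ℕ} (α β : Fin n → ℕ) : ℕ :=
  ∑ j : Fin n, (∑ i ∈ Finset.univ.filter (fun i : Fin n => i ≤ j),
      ((α i : ℤ) - (β i : ℤ))).natAbs

/-- The Young diagram associated to a weak composition `α = (α_1, …, α_n)`: the diagram of
the partition `((n-1)^{α_1}, (n-2)^{α_2}, …, 1^{α_{n-1}})`, where exponents denote
multiplicities of parts.  A cell `(i, j)` (row `i`, column `j`, `0`-indexed) belongs to the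
diagram exactly when row `i` has length `> j`, i.e. when `i` is less than the number of
parts of size `≥ j+1`, which is `α_1 + ⋯ + α_{n-1-j}`. -/
def toDiagram (n : ℕ) (α : Fin n → ℕ) : Finset (ℕ × ℕ) :=
  (Finset.range (∑ i, α i) ×ˢ Finset.range (n - 1)).filter
    (fun c => c.1 < ∑ i ∈ Finset.univ.filter (fun i : Fin n => (i : ℕ) < n - 1 - c.2), α i)

/-- Partial sums of a composition. -/
def psum {n : ℕ} (α : Fin n → ℕ) (k : ℕ) : ℕ :=
  ∑ i ∈ Finset.univ.filter (fun i : Fin n => (i : ℕ) < k), α i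

theorem psum_mono {n : ℕ} (α : Fin n → ℕ) {k l : ℕ} (h : k ≤ l) : psum α k ≤ psum α l := by
  apply Finset.sum_le_sum_of_subset
  intro i
  simp only [Finset.mem_filter, Finset.mem_univ, true_and]
  omega

theorem psum_zero {n : ℕ} (α : Fin n → ℕ) : psum α 0 = 0 := by
  simp [psum]

theorem psum_top {n : ℕ} (α : Fin n → ℕ) : psum α n = ∑ i, α i := by
  simp [psum]

theorem psum_le {n : ℕ} (α : Fin n → ℕ) (k : ℕ) : psum α k ≤ ∑ i, α i :=
  Finset.sum_le_sum_of_subset (Finset.filter_subset _ _)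

theorem psum_succ {n : ℕ} (α : Fin n → ℕ) (k : Fin n) :
    psum α ((k : ℕ) + 1) = psum α k + α k := by
  have h : Finset.univ.filter (fun i : Fin n => (i : ℕ) < (k : ℕ) + 1)
      = insert k (Finset.univ.filter (fun i : Fin n => (i : ℕ) < (k : ℕ))) := by
    ext i
    simp only [Finset.mem_filter, Finset.mem_univ, true_and, Finset.mem_insert, Fin.ext_iff]
    omega
  unfold psum
  rw [h, Finset.sum_insert (by simp), add_comm]

theorem mem_toDiagram {n : ℕ} (α : Fin n → ℕ) (i j : ℕ) :
    (i, j) ∈ toDiagram n α ↔ j < n - 1 ∧ i < psum α (n - 1 - j) := by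
  have := psum_le α (n - 1 - j)
  simp only [toDiagram, Finset.mem_filter, Finset.mem_product, Finset.mem_range]
  change (_ ∧ i < psum α (n - 1 - j)) ↔ _
  constructor
  · rintro ⟨⟨_, h⟩, h'⟩
    exact ⟨h, h'⟩
  · rintro ⟨h, h'⟩
    exact ⟨⟨by omega, h⟩, h'⟩

theorem card_symmDiff_toDiagram (m : ℕ) (α β : Fin (m + 1) → ℕ) :
    (symmDiff (toDiagram (m + 1) α) (toDiagram (m + 1) β)).card
      = ∑ j ∈ Finset.range m, ((psum α (m - j) : ℤ) - psum β (m - j)).natAbs := by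
  rw [Finset.card_eq_sum_card_fiberwise (f := Prod.snd) (t := Finset.range m)]
  · refine Finset.sum_congr rfl fun j hj => ?_
    have hj' := Finset.mem_range.1 hj
    have : (symmDiff (toDiagram (m + 1) α) (toDiagram (m + 1) β)).filter (fun c => c.2 = j)
        = (Finset.Ico (min (psum α (m - j)) (psum β (m - j)))
            (max (psum α (m - j)) (psum β (m - j)))) ×ˢ {j} := by
      ext ⟨a, b⟩
      simp only [Finset.mem_filter, Finset.mem_symmDiff, mem_toDiagram, Finset.mem_product,
        Finset.mem_Ico, Finset.mem_singleton, Nat.add_sub_cancel]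
      constructor
      · rintro ⟨h, rfl⟩
        omega
      · rintro ⟨h, rfl⟩
        omega
    rw [this, Finset.card_product, Nat.card_Ico, Finset.card_singleton]
    omega
  · rintro ⟨a, b⟩ h
    simp only [Finset.mem_coe, Finset.mem_symmDiff, mem_toDiagram, Finset.mem_range] at h ⊢
    omega

theorem EMD_eq (m : ℕ) (α β : Fin (m + 1) → ℕ) (h : ∑ i, α i = ∑ i, β i) :
    EMD α β = ∑ j ∈ Finset.range m, ((psum α (m - j) : ℤ) - psum β (m - j)).natAbs := by
  have h1 : EMD α β = ∑ j : Fin (m + 1),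
      (fun k : ℕ => ((psum α (k + 1) : ℤ) - psum β (k + 1)).natAbs) (j : ℕ) := by
    unfold EMD
    refine Finset.sum_congr rfl fun j _ => ?_
    have hf : Finset.univ.filter (fun i : Fin (m + 1) => i ≤ j)
        = Finset.univ.filter (fun i : Fin (m + 1) => (i : ℕ) < (j : ℕ) + 1) := by
      ext i
      simp only [Finset.mem_filter, Finset.mem_univ, true_and, Fin.le_def]
      omega
    rw [hf, Finset.sum_sub_distrib]
    simp [psum]
  rw [h1, Fin.sum_univ_eq_sum_range
    (fun k : ℕ => ((psum α (k + 1) : ℤ) - psum β (k + 1)).natAbs) (m + 1), Finset.sum_range_succ, psum_top, psum_top, h,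
    ← Finset.sum_range_reflect]
  simp only [sub_self, Int.natAbs_zero, add_zero]
  refine Finset.sum_congr rfl fun j hj => ?_
  have hj' := Finset.mem_range.1 hj
  rw [show m - 1 - j + 1 = m - j by omega]

theorem exists_of_mono (n s : ℕ) (c : ℕ → ℕ) (hc : Monotone c) (h0 : c 0 = 0) (hs : c n = s) :
    ∃ α : Fin n → ℕ, ∑ i, α i = s ∧ ∀ k ≤ n, psum α k = c k := by
  refine ⟨fun i => c (i + 1) - c i, ?_⟩
  have key : ∀ k ≤ n, psum (fun i : Fin n => c (i + 1) - c i) k = c k := by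
    intro k
    induction k with
    | zero => intro _; rw [psum_zero, h0]
    | succ k ih =>
      intro hk
      have := psum_succ (fun i : Fin n => c (i + 1) - c i) ⟨k, hk⟩
      simp only at this
      rw [this, ih (by omega)]
      have := hc (Nat.le_succ k)
      simp only [Nat.succ_eq_add_one] at this
      omega
  refine ⟨?_, key⟩
  rw [← psum_top, key n le_rfl, hs]

/-- The bijection and distance identity of Section 4.2: `α ↦ toDiagram n α` maps the weak
compositions of `s` into `n` parts bijectively onto `Par(s×(n-1))`, and under this map the
earth mover's distance becomes the size of the symmetric difference of Young diagrams. -/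
theorem composition_diagram_bijection (s n : ℕ) (hn : 1 ≤ n) :
    Set.BijOn (toDiagram n)
      ((Finset.Nat.antidiagonalTuple n s : Finset (Fin n → ℕ)) : Set (Fin n → ℕ))
      ((Par s (n - 1) : Finset (Finset (ℕ × ℕ))) : Set (Finset (ℕ × ℕ))) ∧
    ∀ α ∈ Finset.Nat.antidiagonalTuple n s, ∀ β ∈ Finset.Nat.antidiagonalTuple n s,
      EMD α β = (symmDiff (toDiagram n α) (toDiagram n β)).card := by
  obtain ⟨m, rfl⟩ : ∃ m, n = m + 1 := ⟨n - 1, by omega⟩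
  refine ⟨⟨?_, ?_, ?_⟩, ?_⟩
  · intro α hα
    have hα' : ∑ i, α i = s := by simpa [Finset.Nat.mem_antidiagonalTuple] using hα
    simp only [Par, Finset.coe_filter, Set.mem_ofPred_eq, Finset.mem_powerset]
    constructor
    · rintro ⟨i, j⟩ h
      rw [mem_toDiagram] at h
      have := psum_le α (m + 1 - 1 - j)
      simp only [Finset.mem_product, Finset.mem_range]
      omega
    · rintro ⟨i, j⟩ ⟨i', j'⟩ hle h
      obtain ⟨h1, h2⟩ := Prod.mk_le_mk.1 hle
      rw [Finset.mem_coe, mem_toDiagram] at h ⊢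
      have := psum_mono α (show m + 1 - 1 - j ≤ m + 1 - 1 - j' by omega)
      omega
  · intro α hα β hβ hab
    have hα' : ∑ i, α i = s := by simpa [Finset.Nat.mem_antidiagonalTuple] using hα
    have hβ' : ∑ i, β i = s := by simpa [Finset.Nat.mem_antidiagonalTuple] using hβ
    have key : ∀ k ≤ m + 1, psum α k = psum β k := by
      intro k hk
      rcases Nat.eq_zero_or_pos k with rfl | hpos
      · rw [psum_zero, psum_zero]
      rcases Nat.lt_or_ge m k with hlt | hge
      · obtain rfl : k = m + 1 := by omega
        rw [psum_top, psum_top, hα', hβ']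
      · have h : ∀ i, i < psum α k ↔ i < psum β k := by
          intro i
          have e : (i, m - k) ∈ toDiagram (m + 1) α ↔ (i, m - k) ∈ toDiagram (m + 1) β := by
            rw [hab]
          rw [mem_toDiagram, mem_toDiagram, show m + 1 - 1 - (m - k) = k by omega] at e
          have : m - k < m + 1 - 1 := by omega
          simpa only [this, true_and] using e
        have h1 := h (psum α k)
        have h2 := h (psum β k)
        omega
    funext k
    have h1 := psum_succ α k
    have h2 := psum_succ β k
    have h3 := key k (by omega)
    have h4 := key (k + 1) (by omega)
    omega
  · intro S hS
    simp only [Par, Finset.coe_filter, Set.mem_ofPred_eq, Finset.mem_powerset] at hS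
    obtain ⟨hsub, hlow⟩ := hS
    let μ : YoungDiagram := ⟨S, hlow⟩
    have hmem : ∀ i j, (i, j) ∈ S ↔ i < μ.colLen j := fun i j =>
      YoungDiagram.mem_iff_lt_colLen (μ := μ)
    have hrect : ∀ i j, (i, j) ∈ S → i < s ∧ j < m := by
      intro i j h
      simpa using hsub h
    have hle : ∀ j, μ.colLen j ≤ s := by
      intro j
      by_contra hcon
      have := hrect s j ((hmem s j).2 (by omega))
      omega
    let c : ℕ → ℕ := fun k => if k = 0 then 0 else if m < k then s else μ.colLen (m - k)
    have hc : Monotone c := by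
      intro a b hab
      have h1 := μ.colLen_anti (m - b) (m - a) (by omega)
      have h2 := hle (m - a)
      simp only [c]
      split_ifs <;> omega
    obtain ⟨α, hα, hαc⟩ := exists_of_mono (m + 1) s c hc (by simp [c]) (by simp [c])
    refine ⟨α, by simpa [Finset.Nat.mem_antidiagonalTuple] using hα, ?_⟩
    ext ⟨i, j⟩
    rw [mem_toDiagram, Nat.add_sub_cancel, hαc _ (by omega), hmem]
    constructor
    · rintro ⟨hj, h⟩
      simp only [c] at h
      rw [if_neg (by omega), if_neg (by omega), show m - (m - j) = j by omega] at h
      exact h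
    · intro h
      have hj := (hrect i j ((hmem i j).2 h)).2
      refine ⟨hj, ?_⟩
      simp only [c]
      rw [if_neg (by omega), if_neg (by omega), show m - (m - j) = j by omega]
      exact h
  · intro α hα β hβ
    rw [Finset.Nat.mem_antidiagonalTuple] at hα hβ
    rw [card_symmDiff_toDiagram, EMD_eq _ _ _ (hα.trans hβ.symm)]
end
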